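/- arXiv:2209.09160 — 6 statements merged into one kernel-verified Lean document; each statement's English description precedes it below -/
import Mathlib

section
/- Let σ be a Borel probability measure on the circle 𝕋 = ℝ/ℤ that is mutually singular with respect to the Haar probability measure m. Then for every integer N ≥ 1 there exists an integer P ≥ 1 such that the number of indices k ∈ {0, …, P−1} with σ(I_{k,P}) < 1/(N·P) is strictly greater than (1 − 1/N)·P. -/
open MeasureTheory Filter Set
open scoped ENNReal

/-- The arc `I_{k,P}` of the circle `ℝ/ℤ`: the image of `[k/P, (k+1)/P)` under the
quotient map `ℝ → ℝ/ℤ`. -/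
noncomputable def arc (k P : ℕ) : Set (AddCircle (1 : ℝ)) :=
  (fun x : ℝ => (x : AddCircle (1 : ℝ))) '' Set.Ico ((k : ℝ) / P) (((k : ℝ) + 1) / P)

lemma arc_mem_unit {k P : ℕ} (hk : k < P) {x : ℝ}
    (hx : x ∈ Set.Ico ((k : ℝ) / P) (((k : ℝ) + 1) / P)) : x ∈ Set.Ico (0 : ℝ) (0 + 1) := by
  have hP : (0 : ℝ) < P := by exact_mod_cast (Nat.zero_le k).trans_lt hk
  have hk' : (k : ℝ) + 1 ≤ P := by exact_mod_cast hk
  refine ⟨le_trans (by positivity) hx.1, hx.2.trans_le ?_⟩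
  rw [zero_add, div_le_one hP]; exact hk'

lemma arc_measurable {k P : ℕ} (hk : k < P) : MeasurableSet (arc k P) := by
  have : arc k P = (AddCircle.measurableEquivIco (1 : ℝ) 0) ⁻¹'
      (Subtype.val ⁻¹' Set.Ico ((k : ℝ) / P) (((k : ℝ) + 1) / P)) := by
    ext y
    constructor
    · rintro ⟨x, hx, rfl⟩
      have h := arc_mem_unit hk hx
      have : (AddCircle.equivIco (1 : ℝ) 0) (x : AddCircle (1 : ℝ)) = ⟨x, h⟩ := by
        rw [← Equiv.eq_symm_apply]; rfl
      change ((AddCircle.equivIco (1 : ℝ) 0 (x : AddCircle (1 : ℝ))) : ℝ) ∈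
        Set.Ico ((k : ℝ) / P) (((k : ℝ) + 1) / P)
      rw [this]; exact hx
    · intro hy
      exact ⟨_, hy, (AddCircle.equivIco (1 : ℝ) 0).symm_apply_apply y⟩
  rw [this]
  exact (AddCircle.measurableEquivIco (1 : ℝ) 0).measurable
    (measurable_subtype_coe measurableSet_Ico)

lemma arc_disjoint {k l P : ℕ} (hk : k < P) (hl : l < P) (hkl : k ≠ l) :
    Disjoint (arc k P) (arc l P) := by
  rw [Set.disjoint_left]
  rintro _ ⟨x, hx, rfl⟩ ⟨y, hy, hxy⟩
  have hP : (0 : ℝ) < P := by exact_mod_cast (Nat.zero_le k).trans_lt hk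
  have e : y = x := (AddCircle.coe_eq_coe_iff_of_mem_Ico (arc_mem_unit hl hy)
    (arc_mem_unit hk hx)).1 hxy
  subst e
  apply hkl
  have h1 := hx.1; have h2 := hx.2; have h3 := hy.1; have h4 := hy.2
  rw [div_le_iff₀ hP] at h1 h3
  rw [lt_div_iff₀ hP] at h2 h4
  have a : (k : ℝ) < l + 1 := by linarith
  have b : (l : ℝ) < k + 1 := by linarith
  have a' : k < l + 1 := by exact_mod_cast a
  have b' : l < k + 1 := by exact_mod_cast b
  omega

lemma arc_volume {k P : ℕ} (hk : k < P) : ENNReal.ofReal (1 / P) ≤ volume (arc k P) := by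
  have hP : (0 : ℝ) < P := by exact_mod_cast (Nat.zero_le k).trans_lt hk
  rw [AddCircle.add_projection_respects_measure (T := 1) 0 (arc_measurable hk)]
  have : ENNReal.ofReal (1 / P) = volume (Set.Ioo ((k : ℝ) / P) (((k : ℝ) + 1) / P)) := by
    rw [Real.volume_Ioo]; congr 1; field_simp; ring
  rw [this]
  apply measure_mono
  intro x hx
  have h' := arc_mem_unit hk (Set.Ioo_subset_Ico_self hx)
  refine ⟨⟨x, Set.Ioo_subset_Ico_self hx, rfl⟩, lt_of_le_of_lt (by positivity) hx.1, h'.2.le⟩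

lemma arc_count (μ : Measure (AddCircle (1 : ℝ))) [IsFiniteMeasure μ] {P : ℕ} (B : Finset ℕ)
    (hB : ∀ k ∈ B, k < P) (V : Set (AddCircle (1 : ℝ))) (hV : ∀ k ∈ B, arc k P ⊆ V)
    (c d : ℝ) (hd : 0 ≤ d) (hc : ∀ k ∈ B, ENNReal.ofReal c ≤ μ (arc k P))
    (hVd : μ V ≤ ENNReal.ofReal d) : (B.card : ℝ) * c ≤ d := by
  have h : (B.card : ℝ≥0∞) * ENNReal.ofReal c ≤ ENNReal.ofReal d := by
    calc (B.card : ℝ≥0∞) * ENNReal.ofReal c = ∑ k ∈ B, ENNReal.ofReal c := by simp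
      _ ≤ ∑ k ∈ B, μ (arc k P) := Finset.sum_le_sum hc
      _ = μ (⋃ k ∈ B, arc k P) := by
        rw [measure_biUnion_finset]
        · intro k hk l hl hkl
          exact arc_disjoint (hB k hk) (hB l hl) hkl
        · intro k hk
          exact arc_measurable (hB k hk)
      _ ≤ μ V := measure_mono (Set.iUnion₂_subset hV)
      _ ≤ _ := hVd
  rw [← ENNReal.ofReal_natCast, ← ENNReal.ofReal_mul (by positivity)] at h
  exact (ENNReal.ofReal_le_ofReal_iff hd).1 h

lemma arc_dist {k P : ℕ} {x y : AddCircle (1 : ℝ)} (hx : x ∈ arc k P) (hy : y ∈ arc k P) :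
    dist x y ≤ 1 / P := by
  obtain ⟨a, ha, rfl⟩ := hx
  obtain ⟨b, hb, rfl⟩ := hy
  have e : ((k : ℝ) + 1) / P = k / P + 1 / P := by ring
  rw [dist_eq_norm]
  change ‖((a - b : ℝ) : AddCircle (1 : ℝ))‖ ≤ _
  refine (QuotientAddGroup.norm_mk_le_norm).trans ?_
  rw [Real.norm_eq_abs, abs_le]
  have h1 := ha.1; have h2 := ha.2; have h3 := hb.1; have h4 := hb.2
  constructor <;> linarith

/-- If a Borel probability measure `σ` on the circle is mutually singular with respect to
Haar measure, then for every `N ≥ 1` there is `P ≥ 1` such that the number of `k < P`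
with `σ(I_{k,P}) < 1/(N·P)` exceeds `(1 - 1/N)·P`. -/
theorem singular_implies_small_arcs
    (σ : Measure (AddCircle (1 : ℝ))) [IsProbabilityMeasure σ]
    (hsing : σ.MutuallySingular volume) :
    ∀ N : ℕ, 1 ≤ N → ∃ P : ℕ, 1 ≤ P ∧
      (1 - 1 / (N : ℝ)) * (P : ℝ) <
        (({k : ℕ | k < P ∧ σ (arc k P) < 1 / ((N : ℝ≥0∞) * (P : ℝ≥0∞))}.ncard : ℝ)) := by
  classical
  intro N hN
  have hN0 : (0 : ℝ) < N := by exact_mod_cast hN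
  obtain ⟨A, hA, hσA, hmA⟩ := hsing
  set ε : ℝ := 1 / (4 * N ^ 2) with hε
  set δ : ℝ := 1 / (4 * N) with hδ
  have hε0 : 0 < ε := by positivity
  have hδ0 : 0 < δ := by positivity
  obtain ⟨K, hKA, hK, hσK⟩ := hA.compl.exists_isCompact_sdiff_lt (μ := σ) (measure_ne_top _ _)
    (ε := ENNReal.ofReal ε) (by simpa using hε0)
  have hσKc : σ Kᶜ ≤ ENNReal.ofReal ε := by
    have : Kᶜ ⊆ A ∪ (Aᶜ \ K) := by
      intro x hx
      by_cases h : x ∈ A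
      · exact Or.inl h
      · exact Or.inr ⟨h, hx⟩
    calc σ Kᶜ ≤ σ (A ∪ (Aᶜ \ K)) := measure_mono this
      _ ≤ σ A + σ (Aᶜ \ K) := measure_union_le _ _
      _ ≤ _ := by rw [hσA, zero_add]; exact hσK.le
  have hmK : volume K = 0 := measure_mono_null hKA hmA
  have ht := tendsto_measure_cthickening_of_isCompact (μ := volume) hK
  rw [hmK] at ht
  have hev : ∀ᶠ r in nhds (0 : ℝ), volume (Metric.cthickening r K) < ENNReal.ofReal δ :=
    ht.eventually (gt_mem_nhds (by simpa using hδ0))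
  have hev2 := (tendsto_one_div_add_atTop_nhds_zero_nat (𝕜 := ℝ)).eventually hev
  obtain ⟨n, hn⟩ := hev2.exists
  refine ⟨n + 1, by omega, ?_⟩
  set P := n + 1 with hPdef
  have hP0 : (0 : ℝ) < P := by positivity
  have hn' : volume (Metric.cthickening (1 / (P : ℝ)) K) ≤ ENNReal.ofReal δ := by
    have : (P : ℝ) = n + 1 := by simp [hPdef]
    rw [this]; exact hn.le
  have hthr : (1 : ℝ≥0∞) / ((N : ℝ≥0∞) * (P : ℝ≥0∞)) = ENNReal.ofReal (1 / (N * P)) := by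
    rw [ENNReal.ofReal_div_of_pos (by positivity), ENNReal.ofReal_mul hN0.le]
    simp
  rw [hthr]
  set G := (Finset.range P).filter (fun k => σ (arc k P) < ENNReal.ofReal (1 / (N * P))) with hG
  set B := (Finset.range P).filter (fun k => ¬ σ (arc k P) < ENNReal.ofReal (1 / (N * P))) with hB
  have hset : {k : ℕ | k < P ∧ σ (arc k P) < ENNReal.ofReal (1 / (N * P))} = (G : Set ℕ) := by
    ext k; simp [hG]
  rw [hset, Set.ncard_coe_finset]
  have hGB : G.card + B.card = P := by
    rw [hG, hB, Finset.card_filter_add_card_filter_not, Finset.card_range]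
  have hBB := Finset.card_filter_add_card_filter_not (s := B) (fun k => Disjoint (arc k P) K)
  have hBlt : ∀ k ∈ B, k < P := fun k hk => by
    rw [hB, Finset.mem_filter, Finset.mem_range] at hk; exact hk.1
  have h2 := arc_count σ (P := P) (B.filter (fun k => Disjoint (arc k P) K))
    (fun k hk => hBlt k (Finset.mem_filter.1 hk).1) Kᶜ
    (fun k hk => (Finset.mem_filter.1 hk).2.subset_compl_right) (1 / (N * P)) ε hε0.le
    (fun k hk => by
      have := (Finset.mem_filter.1 (Finset.mem_filter.1 hk).1).2
      exact not_lt.1 this) hσKc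
  have h1 := arc_count volume (P := P) (B.filter (fun k => ¬ Disjoint (arc k P) K))
    (fun k hk => hBlt k (Finset.mem_filter.1 hk).1) (Metric.cthickening (1 / (P : ℝ)) K)
    (fun k hk x hx => by
      obtain ⟨y, hy, hyK⟩ := Set.not_disjoint_iff.1 (Finset.mem_filter.1 hk).2
      exact Metric.mem_cthickening_of_dist_le x y _ K hyK (arc_dist hx hy)) (1 / P) δ hδ0.le
    (fun k hk => arc_volume (hBlt k (Finset.mem_filter.1 hk).1)) hn'
  set b1 := (B.filter (fun k => ¬ Disjoint (arc k P) K)).card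
  set b2 := (B.filter (fun k => Disjoint (arc k P) K)).card
  have hGB' : (G.card : ℝ) + (b2 + b1) = P := by
    rw [← hBB] at hGB; exact_mod_cast hGB
  have h1' : (b1 : ℝ) ≤ P / (4 * N) := by
    rw [mul_one_div, div_le_iff₀ hP0] at h1
    refine h1.trans_eq ?_
    rw [hδ]; ring
  have h2' : (b2 : ℝ) ≤ P / (4 * N) := by
    rw [mul_one_div, div_le_iff₀ (by positivity)] at h2
    refine h2.trans_eq ?_
    rw [hε]; field_simp
  have h3 : (P : ℝ) / N = 4 * (P / (4 * N)) := by field_simp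
  have h4 : (0 : ℝ) < P / (4 * N) := by positivity
  have h5 : (1 - 1 / (N : ℝ)) * (P : ℝ) = P - P / N := by ring
  rw [h5]
  linarith
end

section
/- Let σ be a finite Borel measure on the circle 𝕋 = ℝ/ℤ. Suppose that for every integer N ≥ 1 there exists an integer P ≥ 1 such that the number of indices k ∈ {0, …, P−1} with σ(I_{k,P}) < 1/(N·P) is strictly greater than (1 − 1/N)·P. Then σ is mutually singular with respect to the Haar measure m. -/
open MeasureTheory Filter Set
open scoped ENNReal

lemma arc_volume_le (k P : ℕ) (hP : 1 ≤ P) :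
    (volume : Measure (AddCircle (1 : ℝ))) (arc k P) ≤ ENNReal.ofReal (1 / (P : ℝ)) := by
  have hP' : (0 : ℝ) < P := by exact_mod_cast hP
  have hsub : arc k P ⊆ Metric.closedBall
      (((((k : ℝ) + 1 / 2) / P : ℝ)) : AddCircle (1 : ℝ)) (1 / (2 * P)) := by
    rintro _ ⟨x, ⟨hx1, hx2⟩, rfl⟩
    rw [mem_closedBall_iff_norm]
    change ‖((x : ℝ) : AddCircle (1 : ℝ)) - _‖ ≤ _
    rw [← AddCircle.coe_sub]
    refine (QuotientAddGroup.norm_mk_le_norm).trans ?_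
    rw [Real.norm_eq_abs, abs_le]
    have e1 : ((k : ℝ) + 1 / 2) / P = k / P + 1 / (2 * P) := by field_simp
    have e2 : ((k : ℝ) + 1) / P = k / P + 2 * (1 / (2 * P)) := by field_simp
    rw [e2] at hx2
    rw [e1]
    constructor <;> linarith
  refine (measure_mono hsub).trans ?_
  rw [AddCircle.volume_closedBall]
  apply ENNReal.ofReal_le_ofReal
  refine (min_le_right _ _).trans (le_of_eq ?_)
  field_simp

lemma arc_cover (P : ℕ) (hP : 1 ≤ P) (x : AddCircle (1 : ℝ)) : ∃ k < P, x ∈ arc k P := by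
  have hP' : (0 : ℝ) < P := by exact_mod_cast hP
  have hx : x ∈ ((↑) : ℝ → AddCircle (1 : ℝ)) '' Ico (0 : ℝ) (0 + 1) := by
    rw [AddCircle.coe_image_Ico_eq]; trivial
  obtain ⟨t, ⟨h0, h1⟩, rfl⟩ := hx
  have h2 : 0 ≤ t * P := by positivity
  refine ⟨⌊t * P⌋₊, ?_, t, ⟨?_, ?_⟩, rfl⟩
  · rw [Nat.floor_lt h2]
    nlinarith
  · rw [div_le_iff₀ hP']
    exact Nat.floor_le h2
  · rw [lt_div_iff₀ hP']
    exact Nat.lt_floor_add_one _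

lemma good_set (σ : Measure (AddCircle (1 : ℝ))) (N P : ℕ) (hN : 1 ≤ N) (hP : 1 ≤ P)
    (h : (1 - 1 / (N : ℝ)) * (P : ℝ) <
        (({k : ℕ | k < P ∧ σ (arc k P) < 1 / ((N : ℝ≥0∞) * (P : ℝ≥0∞))}.ncard : ℝ))) :
    ∃ G : Set (AddCircle (1 : ℝ)), σ G ≤ (N : ℝ≥0∞)⁻¹ ∧ volume Gᶜ ≤ (N : ℝ≥0∞)⁻¹ := by
  classical
  have hP' : (0 : ℝ) < P := by exact_mod_cast hP
  have hN' : (0 : ℝ) < N := by exact_mod_cast hN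
  set p : ℕ → Prop := fun k => σ (arc k P) < 1 / ((N : ℝ≥0∞) * (P : ℝ≥0∞)) with hp
  have hS : {k : ℕ | k < P ∧ σ (arc k P) < 1 / ((N : ℝ≥0∞) * (P : ℝ≥0∞))}
      = ((Finset.range P).filter p : Finset ℕ) := by
    ext k; simp [hp]
  rw [hS, Set.ncard_coe_finset] at h
  have hcard := Finset.card_filter_add_card_filter_not (s := Finset.range P) p
  rw [Finset.card_range] at hcard
  set A := (Finset.range P).filter p
  set B := (Finset.range P).filter (fun k => ¬ p k)
  refine ⟨⋃ k ∈ A, arc k P, ?_, ?_⟩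
  · calc σ (⋃ k ∈ A, arc k P) ≤ ∑ k ∈ A, σ (arc k P) := measure_biUnion_finset_le _ _
      _ ≤ ∑ k ∈ A, 1 / ((N : ℝ≥0∞) * (P : ℝ≥0∞)) :=
          Finset.sum_le_sum fun k hk => (Finset.mem_filter.1 hk).2.le
      _ = A.card * (1 / ((N : ℝ≥0∞) * (P : ℝ≥0∞))) := by simp
      _ ≤ P * (1 / ((N : ℝ≥0∞) * (P : ℝ≥0∞))) := by
          gcongr; omega
      _ = (N : ℝ≥0∞)⁻¹ := by
          have hp0 : (P : ℝ≥0∞) ≠ 0 := by exact_mod_cast (by omega : P ≠ 0)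
          rw [one_div, ENNReal.mul_inv (Or.inr (ENNReal.natCast_ne_top P)) (Or.inr hp0),
            mul_comm, mul_assoc, ENNReal.inv_mul_cancel hp0 (ENNReal.natCast_ne_top P), mul_one]
  · have hsub : (⋃ k ∈ A, arc k P)ᶜ ⊆ ⋃ k ∈ B, arc k P := by
      intro x hx
      obtain ⟨k, hk, hxk⟩ := arc_cover P hP x
      by_cases hpk : p k
      · exact absurd (mem_biUnion (Finset.mem_filter.2 ⟨Finset.mem_range.2 hk, hpk⟩) hxk) hx
      · exact mem_biUnion (Finset.mem_filter.2 ⟨Finset.mem_range.2 hk, hpk⟩) hxk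
    have hc : (A.card : ℝ) + B.card = P := by exact_mod_cast hcard
    calc volume (⋃ k ∈ A, arc k P)ᶜ ≤ volume (⋃ k ∈ B, arc k P) := measure_mono hsub
      _ ≤ ∑ k ∈ B, volume (arc k P) := measure_biUnion_finset_le _ _
      _ ≤ ∑ k ∈ B, ENNReal.ofReal (1 / (P : ℝ)) :=
          Finset.sum_le_sum fun k _ => arc_volume_le k P hP
      _ = ENNReal.ofReal (B.card * (1 / (P : ℝ))) := by
          rw [ENNReal.ofReal_mul (by positivity)]; simp
      _ ≤ ENNReal.ofReal ((N : ℝ)⁻¹) := by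
          apply ENNReal.ofReal_le_ofReal
          rw [mul_one_div, div_le_iff₀ hP', ← one_div]
          linarith
      _ = (N : ℝ≥0∞)⁻¹ := by
          rw [ENNReal.ofReal_inv_of_pos hN', ENNReal.ofReal_natCast]

/-- If a finite Borel measure `σ` on the circle satisfies: for every `N ≥ 1` there is `P ≥ 1`
such that the number of `k < P` with `σ(I_{k,P}) < 1/(N·P)` exceeds `(1 - 1/N)·P`, then `σ` is
mutually singular with respect to Haar measure. -/
theorem small_arcs_implies_singular
    (σ : Measure (AddCircle (1 : ℝ))) [IsFiniteMeasure σ]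
    (h : ∀ N : ℕ, 1 ≤ N → ∃ P : ℕ, 1 ≤ P ∧
      (1 - 1 / (N : ℝ)) * (P : ℝ) <
        (({k : ℕ | k < P ∧ σ (arc k P) < 1 / ((N : ℝ≥0∞) * (P : ℝ≥0∞))}.ncard : ℝ))) :
    σ.MutuallySingular volume := by
  have key : ∀ n : ℕ, ∃ G : Set (AddCircle (1 : ℝ)),
      σ G ≤ 2⁻¹ ^ n ∧ volume Gᶜ ≤ 2⁻¹ ^ n := by
    intro n
    obtain ⟨P, hP, hh⟩ := h (2 ^ n) Nat.one_le_two_pow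
    obtain ⟨G, h1, h2⟩ := good_set σ (2 ^ n) P Nat.one_le_two_pow hP hh
    refine ⟨G, ?_, ?_⟩
    · simpa [ENNReal.inv_pow] using h1
    · simpa [ENNReal.inv_pow] using h2
  choose G hG1 hG2 using key
  have hsum : ∑' n : ℕ, (2⁻¹ : ℝ≥0∞) ^ n ≠ ∞ := by
    rw [ENNReal.tsum_geometric]
    simp
  have e1 : σ (limsup G atTop) = 0 :=
    measure_limsup_atTop_eq_zero (ne_top_of_le_ne_top hsum (ENNReal.tsum_le_tsum hG1))
  have e2 : volume (limsup (fun n => (G n)ᶜ) atTop) = 0 :=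
    measure_limsup_atTop_eq_zero (ne_top_of_le_ne_top hsum (ENNReal.tsum_le_tsum hG2))
  refine Measure.MutuallySingular.mk e1 e2 ?_
  intro x _
  rw [mem_union, mem_limsup_iff_frequently_mem, mem_limsup_iff_frequently_mem,
    ← Filter.frequently_or_distrib]
  exact Frequently.of_forall fun n => em (x ∈ G n)
end

section
/- Let (X, μ) and (Y, ν) be probability spaces, S an automorphism of (X, μ) and T an automorphism of (Y, ν), and let (m_j) be a strictly increasing sequence of natural numbers such that: (a) S is rigid along (m_j), i.e., μ(A Δ S^{m_j} A) → 0 for every measurable A ⊆ X; (b) for every measurable B ⊆ Y, 4·ν(B ∩ T^{m_j} B ∩ T^{3 m_j} B) → ν(B) + ν(B)² + 2·ν(B)³ as j → ∞. Let R = S × T be the automorphism of the product probability space (X × Y, μ ⊗ ν) given by R(x, y) = (S x, T y). Then for every measurable set C ⊆ X × Y, writing e = (μ ⊗ ν)(C), one has liminf_{j→∞} (μ ⊗ ν)(C ∩ R^{m_j} C ∩ R^{3 m_j} C) ≥ (e + e² + 2e³)/4. -/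
open MeasureTheory Filter
open scoped ENNReal symmDiff

/-- Rigidity along a sequence extends from a generating pi-system to all measurable sets. -/
theorem rigid_ext_aux {Z : Type*} [mZ : MeasurableSpace Z] (ρ : Measure Z) [IsFiniteMeasure ρ]
    (p : ℕ → Z → Z) (hp : ∀ j, MeasurePreserving (p j) ρ ρ) (G : Set (Set Z))
    (hG : mZ = MeasurableSpace.generateFrom G) (hpi : IsPiSystem G)
    (h : ∀ A ∈ G, Tendsto (fun j => ρ (A ∆ (p j ⁻¹' A))) atTop (nhds 0)) :
    ∀ A, MeasurableSet A → Tendsto (fun j => ρ (A ∆ (p j ⁻¹' A))) atTop (nhds 0) := by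
  intro A hA
  induction A, hA using MeasurableSpace.induction_on_inter hG hpi with
  | empty => simp
  | basic t ht => exact h t ht
  | compl t ht ih =>
    simpa only [Set.preimage_compl, compl_symmDiff_compl] using ih
  | iUnion f hd hf ih =>
    have hfin : ∑' i, 2 * ρ (f i) ≠ ∞ := by
      rw [ENNReal.tsum_mul_left, ← measure_iUnion hd hf]
      exact ENNReal.mul_ne_top (by simp) (measure_ne_top _ _)
    have key : Tendsto (fun j => ∫⁻ i, ρ (f i ∆ (p j ⁻¹' f i)) ∂(Measure.count : Measure ℕ))
        atTop (nhds (∫⁻ _, 0 ∂(Measure.count : Measure ℕ))) := by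
      refine tendsto_lintegral_of_dominated_convergence (fun i => 2 * ρ (f i))
        (fun j => measurable_of_countable _) ?_ ?_ ?_
      · intro j
        refine Eventually.of_forall fun i => ?_
        calc ρ (f i ∆ (p j ⁻¹' f i)) ≤ ρ (f i ∪ p j ⁻¹' f i) := measure_mono
              (by rw [Set.symmDiff_def]; exact Set.union_subset_union Set.sdiff_subset Set.sdiff_subset)
          _ ≤ ρ (f i) + ρ (p j ⁻¹' f i) := measure_union_le _ _
          _ = 2 * ρ (f i) := by
            rw [(hp j).measure_preimage (hf i).nullMeasurableSet, two_mul]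
      · rwa [lintegral_count]
      · exact Eventually.of_forall fun i => ih i
    rw [lintegral_zero] at key
    refine tendsto_of_tendsto_of_tendsto_of_le_of_le tendsto_const_nhds key
      (fun _ => zero_le) fun j => ?_
    simp only [lintegral_count]
    refine (measure_mono ?_).trans (measure_iUnion_le _)
    intro z hz
    simp only [Set.mem_symmDiff, Set.mem_iUnion, Set.mem_preimage] at hz ⊢
    rcases hz with ⟨⟨i, hi⟩, h2⟩ | ⟨⟨i, hi⟩, h2⟩
    · exact ⟨i, Or.inl ⟨hi, fun h => h2 ⟨i, h⟩⟩⟩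
    · exact ⟨i, Or.inr ⟨hi, fun h => h2 ⟨i, h⟩⟩⟩

theorem rigid_three_aux {Z : Type*} [MeasurableSpace Z] (ρ : Measure Z)
    (q : Z → Z) (hq : MeasurePreserving q ρ ρ) (C : Set Z) (hC : MeasurableSet C) :
    ρ (C \ (q^[3] ⁻¹' C)) ≤ 3 * ρ (C ∆ (q ⁻¹' C)) := by
  have hm : MeasurableSet (C ∆ (q ⁻¹' C)) := hC.symmDiff (hq.measurable hC)
  have hsub : C \ (q^[3] ⁻¹' C) ⊆ (C ∆ (q ⁻¹' C)) ∪ q^[1] ⁻¹' (C ∆ (q ⁻¹' C))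
      ∪ q^[2] ⁻¹' (C ∆ (q ⁻¹' C)) := by
    intro z hz
    simp only [Set.mem_sdiff, Set.mem_union, Set.mem_preimage, Set.mem_symmDiff,
      Function.iterate_succ, Function.iterate_zero, Function.comp, id] at hz ⊢
    tauto
  calc _ ≤ _ := measure_mono hsub
    _ ≤ ρ (C ∆ (q ⁻¹' C)) + ρ (q^[1] ⁻¹' (C ∆ (q ⁻¹' C))) + ρ (q^[2] ⁻¹' (C ∆ (q ⁻¹' C))) :=
      (measure_union_le _ _).trans (by gcongr; exact measure_union_le _ _)
    _ = _ := by
      rw [(hq.iterate 1).measure_preimage hm.nullMeasurableSet,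
        (hq.iterate 2).measure_preimage hm.nullMeasurableSet]
      ring

theorem image_iterate_aux {Z : Type*} [MeasurableSpace Z] (S : Z ≃ᵐ Z) (n : ℕ) (A : Set Z) :
    (⇑S)^[n] '' A = (⇑S.symm)^[n] ⁻¹' A :=
  congrFun (Set.image_eq_preimage_of_inverse
    (Function.LeftInverse.iterate S.symm_apply_apply n)
    (Function.RightInverse.iterate S.apply_symm_apply n)) A

theorem jensen_aux {X : Type*} [MeasurableSpace X] (μ : Measure X) [IsProbabilityMeasure μ]
    (f : X → ℝ) (hf : Measurable f) (h0 : ∀ x, 0 ≤ f x) (h1 : ∀ x, f x ≤ 1) :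
    (∫ x, f x ∂μ) + (∫ x, f x ∂μ) ^ 2 + 2 * (∫ x, f x ∂μ) ^ 3 ≤
      ∫ x, (f x + f x ^ 2 + 2 * f x ^ 3) ∂μ := by
  have hfi : Integrable f μ := by
    refine Integrable.of_bound hf.aestronglyMeasurable 1 (Eventually.of_forall fun x => ?_)
    rw [Real.norm_eq_abs, abs_of_nonneg (h0 x)]; exact h1 x
  have hgi : Integrable (fun x => f x + f x ^ 2 + 2 * f x ^ 3) μ := by
    refine Integrable.of_bound (by fun_prop) 4 (Eventually.of_forall fun x => ?_)
    have := h0 x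
    rw [Real.norm_eq_abs, abs_of_nonneg (by positivity)]
    have h2 := pow_le_one₀ (n := 2) (h0 x) (h1 x)
    have h3 := pow_le_one₀ (n := 3) (h0 x) (h1 x)
    linarith [h1 x]
  set e := ∫ x, f x ∂μ with he
  have he0 : 0 ≤ e := integral_nonneg h0
  have hlin : ∫ x, ((e + e ^ 2 + 2 * e ^ 3) + (1 + 2 * e + 6 * e ^ 2) * (f x - e)) ∂μ
      = e + e ^ 2 + 2 * e ^ 3 := by
    have hs : Integrable (fun x => f x - e) μ := hfi.sub (integrable_const _)
    rw [integral_add (integrable_const _) (hs.const_mul _), integral_const_mul,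
      integral_sub hfi (integrable_const _)]
    simp [← he]
  rw [← hlin]
  have hs : Integrable (fun x => f x - e) μ := hfi.sub (integrable_const _)
  refine integral_mono ((integrable_const _).add (hs.const_mul _)) hgi fun x => ?_
  have hx := h0 x
  have key : 0 ≤ (f x - e) ^ 2 * (1 + 2 * f x + 4 * e) := by positivity
  simp only
  nlinarith [key]


/-- If `S` is rigid along `(m_j)` and `T` satisfies
`4 ν(B ∩ T^{m_j} B ∩ T^{3 m_j} B) → ν(B) + ν(B)² + 2 ν(B)³`, then for the product
automorphism `R = S × T` and every measurable `C`, with `e = (μ ⊗ ν)(C)`,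
`liminf_j (μ ⊗ ν)(C ∩ R^{m_j} C ∩ R^{3 m_j} C) ≥ (e + e² + 2 e³)/4`. -/
theorem product_triple_intersection_liminf
    {X Y : Type*} [MeasurableSpace X] [MeasurableSpace Y]
    (μ : Measure X) (ν : Measure Y) [IsProbabilityMeasure μ] [IsProbabilityMeasure ν]
    (S : X ≃ᵐ X) (hS : MeasurePreserving S μ μ)
    (T : Y ≃ᵐ Y) (hT : MeasurePreserving T ν ν)
    (m : ℕ → ℕ) (hm : StrictMono m)
    (hSrigid : ∀ A : Set X, MeasurableSet A →
      Tendsto (fun j => μ (A ∆ ((⇑S)^[m j] '' A))) atTop (nhds 0))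
    (hTmix : ∀ B : Set Y, MeasurableSet B →
      Tendsto (fun j => 4 * (ν (B ∩ (⇑T)^[m j] '' B ∩ (⇑T)^[3 * m j] '' B)).toReal) atTop
        (nhds ((ν B).toReal + (ν B).toReal ^ 2 + 2 * (ν B).toReal ^ 3))) :
    ∀ C : Set (X × Y), MeasurableSet C →
      (((μ.prod ν) C).toReal + ((μ.prod ν) C).toReal ^ 2
          + 2 * ((μ.prod ν) C).toReal ^ 3) / 4 ≤
        atTop.liminf (fun j =>
          ((μ.prod ν) (C ∩ (⇑(S.prodCongr T))^[m j] '' C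
            ∩ (⇑(S.prodCongr T))^[3 * m j] '' C)).toReal) := by
  intro C hC
  simp only [image_iterate_aux] at hSrigid hTmix ⊢
  have hs : MeasurePreserving S.symm μ μ := hS.symm S
  have ht : MeasurePreserving T.symm ν ν := hT.symm T
  have hR : ⇑(S.prodCongr T).symm = Prod.map S.symm T.symm := rfl
  simp only [hR]
  generalize (⇑S.symm) = s at *
  generalize (⇑T.symm) = t at *
  have hP : ∀ n, MeasurePreserving (Prod.map s^[n] (id : Y → Y)) (μ.prod ν) (μ.prod ν) :=
    fun n => (hs.iterate n).prod (MeasurePreserving.id ν)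
  have hQ : ∀ n, MeasurePreserving (Prod.map (id : X → X) t^[n]) (μ.prod ν) (μ.prod ν) :=
    fun n => (MeasurePreserving.id μ).prod (ht.iterate n)
  -- rigidity of `S × id`
  have rig : Tendsto (fun j => (μ.prod ν) (C ∆ (Prod.map s^[m j] id ⁻¹' C))) atTop (nhds 0) := by
    refine rigid_ext_aux (μ.prod ν) (fun j => Prod.map s^[m j] id) (fun j => hP _) _
      generateFrom_prod.symm isPiSystem_prod ?_ C hC
    rintro _ ⟨A, hA, B, hB, rfl⟩
    refine tendsto_of_tendsto_of_tendsto_of_le_of_le tendsto_const_nhds (hSrigid A hA)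
      (fun _ => zero_le) fun j => ?_
    calc (μ.prod ν) ((A ×ˢ B) ∆ (Prod.map s^[m j] id ⁻¹' (A ×ˢ B)))
        ≤ (μ.prod ν) ((A ∆ (s^[m j] ⁻¹' A)) ×ˢ Set.univ) := by
          refine measure_mono ?_
          rintro ⟨x, y⟩ h
          simp only [Set.mem_symmDiff, Set.mem_prod, Set.mem_preimage, Prod.map, id,
            Set.mem_univ, and_true] at h ⊢
          tauto
      _ = μ (A ∆ (s^[m j] ⁻¹' A)) := by simp [Measure.prod_prod]
  -- comparison
  set D : ℕ → Set (X × Y) := fun j =>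
    C ∩ Prod.map id t^[m j] ⁻¹' C ∩ Prod.map id t^[3 * m j] ⁻¹' C with hD
  have hDm : ∀ j, MeasurableSet (D j) := fun j =>
    (hC.inter ((hQ _).measurable hC)).inter ((hQ _).measurable hC)
  have hcomp : ∀ j, (μ.prod ν) (D j) ≤
      (μ.prod ν) (C ∩ (Prod.map s t)^[m j] ⁻¹' C ∩ (Prod.map s t)^[3 * m j] ⁻¹' C)
        + 4 * (μ.prod ν) (C ∆ (Prod.map s^[m j] id ⁻¹' C)) := by
    intro j
    have hn : ∀ n, (μ.prod ν) (Prod.map id t^[n] ⁻¹' (C \ (Prod.map s^[n] id ⁻¹' C))) =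
        (μ.prod ν) (C \ (Prod.map s^[n] id ⁻¹' C)) := fun n =>
      (hQ n).measure_preimage (hC.diff ((hP n).measurable hC)).nullMeasurableSet
    have h3 : (μ.prod ν) (C \ (Prod.map s^[3 * m j] id ⁻¹' C)) ≤
        3 * (μ.prod ν) (C ∆ (Prod.map s^[m j] id ⁻¹' C)) := by
      have := rigid_three_aux (μ.prod ν) _ (hP (m j)) C hC
      rwa [Prod.map_iterate, ← Function.iterate_mul, Function.iterate_id, mul_comm (m j)] at this
    have h1 : (μ.prod ν) (C \ (Prod.map s^[m j] id ⁻¹' C)) ≤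
        (μ.prod ν) (C ∆ (Prod.map s^[m j] id ⁻¹' C)) :=
      measure_mono (by rw [Set.symmDiff_def]; exact Set.subset_union_left)
    have hsub : D j ⊆ (C ∩ (Prod.map s t)^[m j] ⁻¹' C ∩ (Prod.map s t)^[3 * m j] ⁻¹' C) ∪
        ((Prod.map id t^[m j] ⁻¹' (C \ (Prod.map s^[m j] id ⁻¹' C))) ∪
        (Prod.map id t^[3 * m j] ⁻¹' (C \ (Prod.map s^[3 * m j] id ⁻¹' C)))) := by
      rintro ⟨x, y⟩ h
      simp only [hD, Prod.map_iterate, Set.mem_inter_iff, Set.mem_union, Set.mem_sdiff,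
        Set.mem_preimage, Prod.map, id] at h ⊢
      tauto
    refine (measure_mono hsub).trans ((measure_union_le _ _).trans ?_)
    gcongr
    refine (measure_union_le _ _).trans ?_
    rw [hn, hn]
    calc _ ≤ _ := add_le_add h1 h3
      _ = _ := by ring
  -- fibres
  have hfib : ∀ E : Set (X × Y), MeasurableSet E →
      ((μ.prod ν) E).toReal = ∫ x, (ν (Prod.mk x ⁻¹' E)).toReal ∂μ := by
    intro E hE
    rw [Measure.prod_apply hE, integral_toReal (measurable_measure_prodMk_left hE).aemeasurable
      (Eventually.of_forall fun x => measure_lt_top _ _)]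
  have hmeas : ∀ E : Set (X × Y), MeasurableSet E →
      Measurable fun x => (ν (Prod.mk x ⁻¹' E)).toReal := fun E hE =>
    (measurable_measure_prodMk_left hE).ennreal_toReal
  have hle1 : ∀ B : Set Y, (ν B).toReal ≤ 1 := fun B =>
    ENNReal.toReal_le_of_le_ofReal zero_le_one (by simpa using prob_le_one)
  have hlim : Tendsto (fun j => ∫ x, 4 * (ν (Prod.mk x ⁻¹' D j)).toReal ∂μ) atTop
      (nhds (∫ x, ((ν (Prod.mk x ⁻¹' C)).toReal + (ν (Prod.mk x ⁻¹' C)).toReal ^ 2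
        + 2 * (ν (Prod.mk x ⁻¹' C)).toReal ^ 3) ∂μ)) := by
    refine tendsto_integral_of_dominated_convergence (fun _ => 4)
      (fun j => ((hmeas _ (hDm j)).const_mul 4).aestronglyMeasurable) (integrable_const _) ?_ ?_
    · intro j
      refine Eventually.of_forall fun x => ?_
      rw [Real.norm_eq_abs, abs_of_nonneg (by positivity)]
      linarith [hle1 (Prod.mk x ⁻¹' D j)]
    · exact Eventually.of_forall fun x => hTmix _ (measurable_prodMk_left hC)
  have hlim2 : Tendsto (fun j => ((μ.prod ν) (D j)).toReal
      - 4 * ((μ.prod ν) (C ∆ (Prod.map s^[m j] id ⁻¹' C))).toReal) atTop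
      (nhds ((∫ x, ((ν (Prod.mk x ⁻¹' C)).toReal + (ν (Prod.mk x ⁻¹' C)).toReal ^ 2
        + 2 * (ν (Prod.mk x ⁻¹' C)).toReal ^ 3) ∂μ) / 4)) := by
    have hr := (ENNReal.tendsto_toReal ENNReal.zero_ne_top).comp rig
    have := (hlim.div_const 4).sub (hr.const_mul 4)
    simp only [ENNReal.toReal_zero, mul_zero, sub_zero] at this
    refine this.congr fun j => ?_
    rw [hfib _ (hDm j), integral_const_mul]
    simp
  have hJ := jensen_aux μ (fun x => (ν (Prod.mk x ⁻¹' C)).toReal) (hmeas C hC)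
    (fun x => ENNReal.toReal_nonneg) (fun x => hle1 _)
  rw [← hfib C hC] at hJ
  refine (div_le_div_of_nonneg_right hJ (by norm_num)).trans ?_
  rw [← hlim2.liminf_eq]
  refine liminf_le_liminf (Eventually.of_forall fun j => ?_) hlim2.isBoundedUnder_ge ?_
  · have := ENNReal.toReal_mono (by finiteness) (hcomp j)
    rw [ENNReal.toReal_add (by finiteness) (by finiteness), ENNReal.toReal_mul] at this
    simp only [ENNReal.toReal_ofNat] at this
    linarith
  · refine IsBoundedUnder.isCoboundedUnder_ge (isBoundedUnder_of ⟨1, fun j => ?_⟩)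
    exact ENNReal.toReal_le_of_le_ofReal zero_le_one (by simpa using prob_le_one)
end

section
/- Let (X, μ) and (Y, ν) be probability spaces, S an automorphism of (X, μ) and T an automorphism of (Y, ν), and let (m_j) be a strictly increasing sequence of natural numbers such that: (a) μ(A Δ S^{m_j} A) → 0 for every measurable A ⊆ X; (b) for every measurable B ⊆ Y, 4·ν(B ∩ T^{m_j} B ∩ T^{3 m_j} B) → ν(B) + ν(B)² + 2·ν(B)³; (c) for every measurable B ⊆ Y, ν(B ∩ T^{−m_j} B ∩ T^{−3 m_j} B) → ν(B)². Assume moreover that there exists a measurable set A₀ ⊆ Y with ν(A₀) = 1/4. Let R = S × T be the automorphism of (X × Y, μ ⊗ ν) given by R(x, y) = (S x, T y). Then R is not conjugate to its inverse: there is no automorphism Φ of (X × Y, μ ⊗ ν) such that Φ(R(p)) = R⁻¹(Φ(p)) for (μ ⊗ ν)-almost every p ∈ X × Y. -/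
open MeasureTheory Filter
open scoped ENNReal symmDiff

namespace ProdAsym

/-- `D ∩ g^{-n} D ∩ g^{-3n} D`. -/
def triple {α : Type*} (g : α → α) (n : ℕ) (D : Set α) : Set α :=
  D ∩ g^[n] ⁻¹' D ∩ g^[3 * n] ⁻¹' D

/-- The set whose fibre over `x` is `B (f x)`. -/
def slab {X Y : Type*} [MeasurableSpace X] (f : SimpleFunc X ℕ) (B : ℕ → Set Y) : Set (X × Y) :=
  {p | p.2 ∈ B (f p.1)}

lemma triple_meas {α : Type*} [MeasurableSpace α] {g : α → α} (hg : Measurable g) (n : ℕ)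
    {D : Set α} (hD : MeasurableSet D) : MeasurableSet (triple g n D) :=
  (hD.inter (hg.iterate n hD)).inter (hg.iterate (3 * n) hD)

section
variable {X Y : Type*} [MeasurableSpace X] [MeasurableSpace Y]

lemma slab_eq (f : SimpleFunc X ℕ) (B : ℕ → Set Y) :
    slab f B = ⋃ i ∈ f.range, (f ⁻¹' {i}) ×ˢ B i := by
  ext ⟨x, y⟩
  simp only [slab, Set.mem_setOf_eq, Set.mem_iUnion, Set.mem_prod, Set.mem_preimage,
    Set.mem_singleton_iff, exists_prop]
  constructor
  · exact fun h => ⟨f x, f.mem_range_self x, rfl, h⟩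
  · rintro ⟨i, _, rfl, h⟩
    exact h

lemma slab_meas (f : SimpleFunc X ℕ) {B : ℕ → Set Y} (hB : ∀ i, MeasurableSet (B i)) :
    MeasurableSet (slab f B) := by
  rw [slab_eq]
  exact Finset.measurableSet_biUnion _ fun i _ => (f.measurableSet_fiber i).prod (hB i)

lemma slab_real (μ : Measure X) (ν : Measure Y) [IsProbabilityMeasure μ] [IsProbabilityMeasure ν]
    (f : SimpleFunc X ℕ) {B : ℕ → Set Y} (hB : ∀ i, MeasurableSet (B i)) :
    (μ.prod ν).real (slab f B) = ∑ i ∈ f.range, μ.real (f ⁻¹' {i}) * ν.real (B i) := by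
  rw [slab_eq, measureReal_biUnion_finset]
  · simp only [measureReal_prod_prod]
  · intro i _ j _ hij
    refine Set.disjoint_left.2 ?_
    rintro ⟨x, y⟩ ⟨h1, _⟩ ⟨h2, _⟩
    exact hij (h1.symm.trans h2)
  · exact fun i _ => (f.measurableSet_fiber i).prod (hB i)

lemma rigid3 (μ : Measure X) [IsProbabilityMeasure μ] {s : X → X} (hs : MeasurePreserving s μ μ)
    (n : ℕ) {A : Set X} (hA : MeasurableSet A) :
    μ.real (A ∆ (s^[3 * n] ⁻¹' A)) ≤ 3 * μ.real (A ∆ (s^[n] ⁻¹' A)) := by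
  have hn := hs.iterate n
  have h1 : μ.real (s^[n] ⁻¹' (A ∆ (s^[n] ⁻¹' A))) = μ.real (A ∆ (s^[n] ⁻¹' A)) :=
    hn.measureReal_preimage (hA.symmDiff (hn.measurable hA)).nullMeasurableSet
  have h2 : μ.real (s^[n] ⁻¹' (s^[n] ⁻¹' (A ∆ (s^[n] ⁻¹' A)))) = μ.real (A ∆ (s^[n] ⁻¹' A)) := by
    rw [hn.measureReal_preimage
      (hn.measurable (hA.symmDiff (hn.measurable hA))).nullMeasurableSet, h1]
  have e : s^[3 * n] ⁻¹' A = s^[n] ⁻¹' (s^[n] ⁻¹' (s^[n] ⁻¹' A)) := by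
    rw [show 3 * n = n + n + n by ring, Function.iterate_add, Function.iterate_add]; rfl
  have a1 := measureReal_symmDiff_le (μ := μ) (s := A) (t := s^[n] ⁻¹' A) (s^[3 * n] ⁻¹' A)
  have a2 := measureReal_symmDiff_le (μ := μ) (s := s^[n] ⁻¹' A) (t := s^[n] ⁻¹' (s^[n] ⁻¹' A))
    (s^[3 * n] ⁻¹' A)
  have b1 : s^[n] ⁻¹' (A ∆ (s^[n] ⁻¹' A)) = (s^[n] ⁻¹' A) ∆ (s^[n] ⁻¹' (s^[n] ⁻¹' A)) := rfl
  have b2 : s^[n] ⁻¹' (s^[n] ⁻¹' (A ∆ (s^[n] ⁻¹' A))) =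
    (s^[n] ⁻¹' (s^[n] ⁻¹' A)) ∆ (s^[3 * n] ⁻¹' A) := by rw [e]; rfl
  rw [b1] at h1
  rw [b2] at h2
  linarith

lemma slab_lim (μ : Measure X) (ν : Measure Y) [IsProbabilityMeasure μ] [IsProbabilityMeasure ν]
    {s : X → X} (hs : MeasurePreserving s μ μ) {t : Y → Y} (ht : MeasurePreserving t ν ν)
    (m : ℕ → ℕ)
    (hr : ∀ A : Set X, MeasurableSet A →
      Tendsto (fun j => μ.real (A ∆ (s^[m j] ⁻¹' A))) atTop (nhds 0))
    (P : ℝ → ℝ)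
    (hP : ∀ B : Set Y, MeasurableSet B →
      Tendsto (fun j => ν.real (triple t (m j) B)) atTop (nhds (P (ν.real B))))
    (f : SimpleFunc X ℕ) {B : ℕ → Set Y} (hB : ∀ i, MeasurableSet (B i)) :
    Tendsto (fun j => (μ.prod ν).real (triple (Prod.map s t) (m j) (slab f B))) atTop
      (nhds (∑ i ∈ f.range, μ.real (f ⁻¹' {i}) * P (ν.real (B i)))) := by
  have main : Tendsto (fun j => (μ.prod ν).real (slab f fun i => triple t (m j) (B i))) atTop
      (nhds (∑ i ∈ f.range, μ.real (f ⁻¹' {i}) * P (ν.real (B i)))) := by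
    simp_rw [fun j => slab_real μ ν f (fun i => triple_meas ht.measurable (m j) (hB i))]
    exact tendsto_finsetSum _ fun i _ => (hP _ (hB i)).const_mul _
  have bound : ∀ j, |(μ.prod ν).real (triple (Prod.map s t) (m j) (slab f B)) -
      (μ.prod ν).real (slab f fun i => triple t (m j) (B i))| ≤
      ∑ i ∈ f.range, 4 * μ.real ((f ⁻¹' {i}) ∆ (s^[m j] ⁻¹' (f ⁻¹' {i}))) := by
    intro j
    refine (abs_measureReal_sub_le_measureReal_symmDiff
      (triple_meas (hs.measurable.prodMap ht.measurable) _ (slab_meas f hB)).nullMeasurableSet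
      (slab_meas f (fun i => triple_meas ht.measurable (m j) (hB i))).nullMeasurableSet).trans ?_
    have sub : (triple (Prod.map s t) (m j) (slab f B)) ∆ (slab f fun i => triple t (m j) (B i)) ⊆
        ⋃ i ∈ f.range, (((f ⁻¹' {i}) ∆ (s^[m j] ⁻¹' (f ⁻¹' {i})) ∪
          (f ⁻¹' {i}) ∆ (s^[3 * m j] ⁻¹' (f ⁻¹' {i}))) ×ˢ (Set.univ : Set Y)) := by
      rintro ⟨x, y⟩ h
      by_contra hn
      simp only [Set.mem_iUnion, not_exists] at hn
      have := hn (f x) (f.mem_range_self x)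
      simp only [Set.mem_prod, Set.mem_union, Set.mem_symmDiff, Set.mem_preimage,
        Set.mem_singleton_iff, Set.mem_univ, and_true, true_and, not_true_eq_false, and_false,
        or_false, not_or, not_not] at this
      obtain ⟨h1, h2⟩ := this
      simp [Set.mem_symmDiff, triple, slab, h1, h2, Prod.map_iterate] at h
      tauto
    refine (measureReal_mono sub (measure_ne_top _ _)).trans ((measureReal_biUnion_finset_le _ _).trans ?_)
    refine Finset.sum_le_sum fun i _ => ?_
    rw [measureReal_prod_prod]
    have := measureReal_union_le (μ := μ) ((f ⁻¹' {i}) ∆ (s^[m j] ⁻¹' (f ⁻¹' {i})))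
          ((f ⁻¹' {i}) ∆ (s^[3 * m j] ⁻¹' (f ⁻¹' {i})))
    have h3 := rigid3 μ hs (m j) (f.measurableSet_fiber i)
    simp only [probReal_univ, mul_one]
    linarith
  have z : Tendsto (fun j => ∑ i ∈ f.range,
      4 * μ.real ((f ⁻¹' {i}) ∆ (s^[m j] ⁻¹' (f ⁻¹' {i})))) atTop (nhds 0) := by
    have := tendsto_finsetSum f.range fun i _ => (hr _ (f.measurableSet_fiber i)).const_mul 4
    simpa using this
  have d := squeeze_zero_norm (fun j => (Real.norm_eq_abs _).trans_le (bound j)) z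
  simpa using d.add main

lemma slab_dense (μ : Measure X) (ν : Measure Y) [IsProbabilityMeasure μ] [IsProbabilityMeasure ν]
    {D : Set (X × Y)} (hD : MeasurableSet D) {ε : ℝ} (hε : 0 < ε) :
    ∃ (f : SimpleFunc X ℕ) (B : ℕ → Set Y), (∀ i, MeasurableSet (B i)) ∧
      (μ.prod ν).real (D ∆ slab f B) < ε := by
  let C : Set (Set (X × Y)) := {D | ∃ (f : SimpleFunc X ℕ) (B : ℕ → Set Y),
    (∀ i, MeasurableSet (B i)) ∧ D = slab f B}
  have hC : IsSetAlgebra C := by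
    refine ⟨⟨SimpleFunc.const _ 0, fun _ => ∅, fun _ => .empty, ?_⟩, ?_, ?_⟩
    · ext; simp [slab]
    · rintro _ ⟨f, B, hB, rfl⟩
      exact ⟨f, fun i => (B i)ᶜ, fun i => (hB i).compl, rfl⟩
    · rintro _ _ ⟨f, B, hB, rfl⟩ ⟨g, B', hB', rfl⟩
      refine ⟨(f.pair g).map (fun p => Nat.pair p.1 p.2),
        fun i => B i.unpair.1 ∪ B' i.unpair.2, fun i => (hB _).union (hB' _), ?_⟩
      ext; simp [slab]
  have hgen : (inferInstance : MeasurableSpace (X × Y)) = MeasurableSpace.generateFrom C := by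
    refine le_antisymm ?_ ?_
    · rw [← generateFrom_prod]
      refine MeasurableSpace.generateFrom_mono ?_
      rintro _ ⟨A, hA, B, hB, rfl⟩
      refine ⟨SimpleFunc.piecewise A hA (SimpleFunc.const _ 1) (SimpleFunc.const _ 0),
        fun i => if i = 1 then B else ∅, ?_, ?_⟩
      · intro i
        dsimp only
        split_ifs
        exacts [hB, .empty]
      · ext ⟨x, y⟩
        by_cases hx : x ∈ A <;> simp [slab, hx]
    · refine MeasurableSpace.generateFrom_le ?_
      rintro _ ⟨f, B, hB, rfl⟩
      exact slab_meas f hB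
  obtain ⟨_, ⟨f, B, hB, rfl⟩, h⟩ :=
    (Measure.MeasureDense.of_generateFrom_isSetAlgebra_finite (μ := μ.prod ν) hC hgen).approx D hD
      (measure_ne_top _ _) ε hε
  exact ⟨f, B, hB, ENNReal.toReal_lt_of_lt_ofReal h⟩

end

lemma triple_close {α : Type*} [MeasurableSpace α] (ρ : Measure α) [IsProbabilityMeasure ρ]
    {g : α → α} (hg : MeasurePreserving g ρ ρ) (n : ℕ) {D E : Set α} (hD : MeasurableSet D)
    (hE : MeasurableSet E) :
    |ρ.real (triple g n D) - ρ.real (triple g n E)| ≤ 3 * ρ.real (D ∆ E) := by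
  refine (abs_measureReal_sub_le_measureReal_symmDiff
      (triple_meas hg.measurable _ hD).nullMeasurableSet
      (triple_meas hg.measurable _ hE).nullMeasurableSet).trans ?_
  have sub : (triple g n D) ∆ (triple g n E) ⊆
      (D ∆ E ∪ g^[n] ⁻¹' (D ∆ E)) ∪ g^[3 * n] ⁻¹' (D ∆ E) := by
    intro x
    simp only [triple, Set.mem_symmDiff, Set.mem_union, Set.mem_inter_iff, Set.mem_preimage]
    tauto
  have h1 := measureReal_mono (μ := ρ) sub
  have h2 := measureReal_union_le (μ := ρ) (D ∆ E ∪ g^[n] ⁻¹' (D ∆ E)) (g^[3 * n] ⁻¹' (D ∆ E))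
  have h3 := measureReal_union_le (μ := ρ) (D ∆ E) (g^[n] ⁻¹' (D ∆ E))
  rw [(hg.iterate _).measureReal_preimage (hD.symmDiff hE).nullMeasurableSet] at h2 h3
  linarith

lemma conj_triple {α : Type*} [MeasurableSpace α] (ρ : Measure α)
    {g g' : α → α} (hg : MeasurePreserving g ρ ρ) (hg' : Measurable g')
    {Φ : α → α} (hΦ : MeasurePreserving Φ ρ ρ)
    (h : ∀ᵐ p ∂ρ, Φ (g p) = g' (Φ p)) (n : ℕ) {D : Set α} (hD : MeasurableSet D) :
    ρ.real (triple g n (Φ ⁻¹' D)) = ρ.real (triple g' n D) := by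
  have it : ∀ k : ℕ, ∀ᵐ p ∂ρ, Φ (g^[k] p) = g'^[k] (Φ p) := by
    intro k
    induction k with
    | zero => simp
    | succ k ih =>
      filter_upwards [hg.quasiMeasurePreserving.ae ih, h] with p h1 h2
      rw [Function.iterate_succ_apply, Function.iterate_succ_apply, h1, h2]
  rw [← hΦ.measureReal_preimage (triple_meas hg' n hD).nullMeasurableSet]
  refine measureReal_congr ?_
  filter_upwards [it n, it (3 * n)] with p h1 h2
  refine propext ?_
  change (Φ p ∈ D ∧ Φ (g^[n] p) ∈ D) ∧ Φ (g^[3 * n] p) ∈ D ↔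
    (Φ p ∈ D ∧ g'^[n] (Φ p) ∈ D) ∧ g'^[3 * n] (Φ p) ∈ D
  rw [h1, h2]

lemma image_iter {α : Type*} [MeasurableSpace α] (e : α ≃ᵐ α) (n : ℕ) (A : Set α) :
    (⇑e)^[n] '' A = (⇑e.symm)^[n] ⁻¹' A :=
  congrFun (Set.image_eq_preimage_of_inverse
    (Function.LeftInverse.iterate e.symm_apply_apply n)
    (Function.LeftInverse.iterate e.apply_symm_apply n)) A

end ProdAsym

open ProdAsym in
/-- If `S` is rigid along `(m_j)`, and `T` satisfies
`4 ν(B ∩ T^{m_j} B ∩ T^{3 m_j} B) → ν(B) + ν(B)² + 2 ν(B)³` as well as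
`ν(B ∩ T^{-m_j} B ∩ T^{-3 m_j} B) → ν(B)²`, and there is a measurable set of `ν`-measure `1/4`,
then the product automorphism `R = S × T` is not conjugate to its inverse. -/
theorem product_asymmetric
    {X Y : Type*} [MeasurableSpace X] [MeasurableSpace Y]
    (μ : Measure X) (ν : Measure Y) [IsProbabilityMeasure μ] [IsProbabilityMeasure ν]
    (S : X ≃ᵐ X) (hS : MeasurePreserving S μ μ)
    (T : Y ≃ᵐ Y) (hT : MeasurePreserving T ν ν)
    (m : ℕ → ℕ) (hm : StrictMono m)
    (hSrigid : ∀ A : Set X, MeasurableSet A →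
      Tendsto (fun j => μ (A ∆ ((⇑S)^[m j] '' A))) atTop (nhds 0))
    (hTmix : ∀ B : Set Y, MeasurableSet B →
      Tendsto (fun j => 4 * (ν (B ∩ (⇑T)^[m j] '' B ∩ (⇑T)^[3 * m j] '' B)).toReal) atTop
        (nhds ((ν B).toReal + (ν B).toReal ^ 2 + 2 * (ν B).toReal ^ 3)))
    (hTinv : ∀ B : Set Y, MeasurableSet B →
      Tendsto (fun j =>
          (ν (B ∩ (⇑T.symm)^[m j] '' B ∩ (⇑T.symm)^[3 * m j] '' B)).toReal) atTop
        (nhds ((ν B).toReal ^ 2)))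
    (A₀ : Set Y) (hA₀ : MeasurableSet A₀) (hA₀meas : ν A₀ = 1 / 4) :
    ¬ ∃ Φ : (X × Y) ≃ᵐ (X × Y), MeasurePreserving Φ (μ.prod ν) (μ.prod ν) ∧
        ∀ᵐ p ∂(μ.prod ν), Φ (S.prodCongr T p) = (S.prodCongr T).symm (Φ p) := by
  rintro ⟨Φ, hΦ, hae⟩
  have hS' : MeasurePreserving S.symm μ μ := hS.symm S
  have hT' : MeasurePreserving T.symm ν ν := hT.symm T
  have hR : MeasurePreserving (Prod.map S T) (μ.prod ν) (μ.prod ν) := hS.prod hT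
  have hR' : MeasurePreserving (Prod.map S.symm T.symm) (μ.prod ν) (μ.prod ν) := hS'.prod hT'
  -- rigidity in preimage form
  have r1 : ∀ A : Set X, MeasurableSet A →
      Tendsto (fun j => μ.real (A ∆ ((⇑S.symm)^[m j] ⁻¹' A))) atTop (nhds 0) := by
    intro A hA
    have := (ENNReal.tendsto_toReal ENNReal.zero_ne_top).comp (hSrigid A hA)
    simpa [image_iter, Function.comp_def, Measure.real] using this
  have r2 : ∀ A : Set X, MeasurableSet A →
      Tendsto (fun j => μ.real (A ∆ ((⇑S)^[m j] ⁻¹' A))) atTop (nhds 0) := by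
    intro A hA
    refine (r1 A hA).congr fun j => ?_
    rw [← (hS.iterate (m j)).measureReal_preimage
      (hA.symmDiff ((hS'.iterate (m j)).measurable hA)).nullMeasurableSet]
    rw [Set.preimage_symmDiff, ← Set.preimage_comp,
      Function.LeftInverse.comp_eq_id (Function.LeftInverse.iterate S.symm_apply_apply (m j)),
      Set.preimage_id, symmDiff_comm]
  have p1 : ∀ B : Set Y, MeasurableSet B →
      Tendsto (fun j => ν.real (triple T.symm (m j) B)) atTop
        (nhds ((fun b : ℝ => (b + b ^ 2 + 2 * b ^ 3) / 4) (ν.real B))) := by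
    intro B hB
    have := (hTmix B hB).div_const 4
    simpa [image_iter, triple, Measure.real] using this
  have p2 : ∀ B : Set Y, MeasurableSet B →
      Tendsto (fun j => ν.real (triple T (m j) B)) atTop
        (nhds ((fun b : ℝ => b ^ 2) (ν.real B))) := by
    intro B hB
    have := hTinv B hB
    simpa [image_iter, triple, Measure.real] using this
  -- the conjugacy, in both directions
  have c1 : ∀ᵐ p ∂(μ.prod ν), Φ (Prod.map S T p) = Prod.map S.symm T.symm (Φ p) := hae
  have c2 : ∀ᵐ p ∂(μ.prod ν), Φ (Prod.map S.symm T.symm p) = Prod.map S T (Φ p) := by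
    filter_upwards [hR'.quasiMeasurePreserving.ae c1] with p hp
    have e : Prod.map S T (Prod.map S.symm T.symm p) = p := by simp [Prod.map]
    rw [e] at hp
    rw [hp]
    simp [Prod.map]
  set ρ := μ.prod ν with hρ
  set C : Set (X × Y) := Set.univ ×ˢ A₀ with hCdef
  have hC : MeasurableSet C := MeasurableSet.univ.prod hA₀
  set D : Set (X × Y) := Φ.symm ⁻¹' C with hDdef
  have hD : MeasurableSet D := Φ.symm.measurable hC
  have hDC : Φ ⁻¹' D = C := by ext p; simp [hDdef]
  have hν : ν.real A₀ = 1 / 4 := by simp [Measure.real, hA₀meas]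
  have hCr : ρ.real C = 1 / 4 := by rw [hCdef, hρ, measureReal_prod_prod, hν]; simp
  have hDr : ρ.real D = 1 / 4 := by
    rw [← hΦ.measureReal_preimage hD.nullMeasurableSet, hDC, hCr]
  have tc : ∀ (s : X → X) (t : Y → Y) (n : ℕ),
      ρ.real (triple (Prod.map s t) n C) = ν.real (triple t n A₀) := by
    intro s t n
    have : triple (Prod.map s t) n C = Set.univ ×ˢ triple t n A₀ := by
      ext ⟨x, y⟩
      simp [triple, hCdef, Prod.map_iterate]
    rw [this, hρ, measureReal_prod_prod]; simp
  have l1 : Tendsto (fun j => ρ.real (triple (Prod.map S T) (m j) D)) atTop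
      (nhds (11 / 128)) := by
    have := p1 A₀ hA₀
    simp only [hν] at this
    norm_num at this
    refine this.congr fun j => ?_
    rw [← tc S.symm T.symm, ← hDC]
    exact conj_triple ρ hR' hR.measurable hΦ c2 (m j) hD
  have l2 : Tendsto (fun j => ρ.real (triple (Prod.map S.symm T.symm) (m j) D)) atTop
      (nhds (1 / 16)) := by
    have := p2 A₀ hA₀
    simp only [hν] at this
    norm_num at this
    norm_num
    refine this.congr fun j => ?_
    rw [← tc S T, ← hDC]
    exact conj_triple ρ hR hR'.measurable hΦ c1 (m j) hD
  obtain ⟨f, B, hB, hDE⟩ := slab_dense μ ν hD (ε := 1 / 1000) (by norm_num)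
  have hE := slab_meas f hB
  have e1 := slab_lim μ ν hS' hT' m r1 (fun b : ℝ => (b + b ^ 2 + 2 * b ^ 3) / 4) p1 f hB
  have e2 := slab_lim μ ν hS hT m r2 (fun b : ℝ => b ^ 2) p2 f hB
  have e0 := slab_real μ ν f hB
  have k1 := le_of_tendsto (l2.sub e1).abs
    (Eventually.of_forall fun j => triple_close ρ hR' (m j) hD hE)
  have k2 := le_of_tendsto (l1.sub e2).abs
    (Eventually.of_forall fun j => triple_close ρ hR (m j) hD hE)
  have k0 := abs_measureReal_sub_le_measureReal_symmDiff (μ := ρ) hD.nullMeasurableSet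
    hE.nullMeasurableSet
  have key : ρ.real (slab f B) + ∑ i ∈ f.range, μ.real (f ⁻¹' {i}) * (ν.real (B i)) ^ 2 ≤
      4 * ∑ i ∈ f.range, μ.real (f ⁻¹' {i}) *
        ((ν.real (B i) + ν.real (B i) ^ 2 + 2 * ν.real (B i) ^ 3) / 4) := by
    rw [e0, ← Finset.sum_add_distrib, Finset.mul_sum]
    refine Finset.sum_le_sum fun i _ => ?_
    have : 0 ≤ μ.real (f ⁻¹' {i}) * ν.real (B i) ^ 3 := by positivity
    nlinarith
  rw [abs_le] at k0 k1 k2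
  rw [hDr] at k0
  linarith [k0.1, k0.2, k1.1, k1.2, k2.1, k2.2]
end

section
/- Let a ∈ (0, 1], let (X, μ) be a probability space and S an automorphism of (X, μ) that is a-rigid along a strictly increasing sequence of natural numbers (n_j), in the sense that for every measurable set A ⊆ X, liminf_{j→∞} μ(A ∩ S^{n_j} A) ≥ a·μ(A). Then for any probability space (Y, ν), the product automorphism S × Id of (X × Y, μ ⊗ ν), given by (x, y) ↦ (S x, y), is a-rigid along the same sequence: for every measurable set C ⊆ X × Y, liminf_{j→∞} (μ ⊗ ν)(C ∩ (S × Id)^{n_j} C) ≥ a·(μ ⊗ ν)(C). -/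
open MeasureTheory Filter
open scoped ENNReal

theorem measurableSet_iterate_image_aux {Z : Type*} [MeasurableSpace Z] (T : Z ≃ᵐ Z) (k : ℕ)
    {C : Set Z} (hC : MeasurableSet C) : MeasurableSet ((⇑T)^[k] '' C) := by
  induction k with
  | zero => simpa using hC
  | succ k ih =>
    rw [Function.iterate_succ', Set.image_comp]
    exact T.measurableEmbedding.measurableSet_image.2 ih

theorem liminf_toReal_aux (u : ℕ → ℝ≥0∞) (hu : ∀ j, u j ≤ 1) :
    atTop.liminf (fun j => (u j).toReal) = (atTop.liminf u).toReal :=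
  ENNReal.liminf_toReal_eq ENNReal.one_ne_top (Eventually.of_forall hu)

theorem liminf_ne_top_aux (u : ℕ → ℝ≥0∞) (hu : ∀ j, u j ≤ 1) : atTop.liminf u ≠ ∞ := by
  have h : atTop.liminf u ≤ atTop.liminf (fun _ : ℕ => (1 : ℝ≥0∞)) :=
    liminf_le_liminf (Eventually.of_forall hu)
  rw [liminf_const] at h
  exact ne_top_of_le_ne_top ENNReal.one_ne_top h

theorem section_iterate_aux {X Y : Type*} [MeasurableSpace X] [MeasurableSpace Y] (S : X ≃ᵐ X)
    (k : ℕ) (C : Set (X × Y)) (y : Y) :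
    (fun x => (x, y)) ⁻¹' (C ∩ (⇑(S.prodCongr (MeasurableEquiv.refl Y)))^[k] '' C) =
      ((fun x => (x, y)) ⁻¹' C) ∩ (⇑S)^[k] '' ((fun x => (x, y)) ⁻¹' C) := by
  have h : ∀ (k : ℕ) (p : X × Y), (⇑(S.prodCongr (MeasurableEquiv.refl Y)))^[k] p =
      ((⇑S)^[k] p.1, p.2) := by
    intro k
    induction k with
    | zero => intro p; rfl
    | succ k ih =>
      intro p
      rw [Function.iterate_succ_apply', Function.iterate_succ_apply', ih]
      rfl
  ext x
  simp only [Set.mem_preimage, Set.mem_inter_iff, Set.mem_image, h, Prod.exists, Prod.mk.injEq]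
  constructor
  · rintro ⟨h1, x', y', h2, h3, rfl⟩
    exact ⟨h1, x', h2, h3⟩
  · rintro ⟨h1, x', h2, h3⟩
    exact ⟨h1, x', y, h2, h3, rfl⟩

/-- If `S` is `a`-rigid along `(n_j)` (that is,
`liminf_j μ(A ∩ S^{n_j} A) ≥ a·μ(A)` for every measurable `A`), then the product `S × Id`
is `a`-rigid along the same sequence. -/
theorem product_with_id_partially_rigid
    {X Y : Type*} [MeasurableSpace X] [MeasurableSpace Y]
    (μ : Measure X) (ν : Measure Y) [IsProbabilityMeasure μ] [IsProbabilityMeasure ν]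
    (a : ℝ) (ha : a ∈ Set.Ioc (0 : ℝ) 1)
    (S : X ≃ᵐ X) (hS : MeasurePreserving S μ μ)
    (n : ℕ → ℕ) (hn : StrictMono n)
    (hrig : ∀ A : Set X, MeasurableSet A →
      a * (μ A).toReal ≤ atTop.liminf fun j => (μ (A ∩ (⇑S)^[n j] '' A)).toReal) :
    ∀ C : Set (X × Y), MeasurableSet C →
      a * ((μ.prod ν) C).toReal ≤
        atTop.liminf fun j =>
          ((μ.prod ν) (C ∩ (⇑(S.prodCongr (MeasurableEquiv.refl Y)))^[n j] '' C)).toReal := by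
  intro C hC
  have hm : ∀ j, MeasurableSet
      (C ∩ (⇑(S.prodCongr (MeasurableEquiv.refl Y)))^[n j] '' C) := fun j =>
    hC.inter (measurableSet_iterate_image_aux _ _ hC)
  rw [liminf_toReal_aux _ (fun j => prob_le_one), ← ENNReal.toReal_ofReal ha.1.le,
    ← ENNReal.toReal_mul]
  refine ENNReal.toReal_mono (liminf_ne_top_aux _ (fun j => prob_le_one)) ?_
  simp_rw [fun j => Measure.prod_apply_symm (μ := μ) (ν := ν) (hm j)]
  rw [Measure.prod_apply_symm hC, ← lintegral_const_mul' _ _ ENNReal.ofReal_ne_top]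
  refine le_trans (lintegral_mono fun y => ?_)
    (lintegral_liminf_le fun j => measurable_measure_prodMk_right (hm j))
  simp_rw [section_iterate_aux]
  have h := hrig _ (measurable_prodMk_right (y := y) hC)
  rw [liminf_toReal_aux _ (fun j => prob_le_one), ← ENNReal.toReal_ofReal ha.1.le,
    ← ENNReal.toReal_mul] at h
  exact (ENNReal.toReal_le_toReal (ENNReal.mul_ne_top ENNReal.ofReal_ne_top (measure_ne_top _ _))
    (liminf_ne_top_aux _ (fun j => prob_le_one))).1 h
end

section
/- Let (X, μ) be a probability space and S an automorphism of (X, μ). Let T = S⁻¹ × S × S be the automorphism of (X³, μ ⊗ μ ⊗ μ) given by (x₁, x₂, x₃) ↦ (S⁻¹ x₁, S x₂, S x₃), and let T^∞ be the automorphism of the countable product space (X³)^ℕ, equipped with the infinite product of countably many copies of the probability measure μ ⊗ μ ⊗ μ, which applies T in every coordinate: (z_i)_{i∈ℕ} ↦ (T z_i)_{i∈ℕ}. Then T^∞ is conjugate to its inverse: there exists an automorphism Φ of the product probability space (X³)^ℕ such that Φ ∘ T^∞ = (T^∞)⁻¹ ∘ Φ. -/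
open MeasureTheory Filter
open scoped ENNReal

/-- The fixed-point-free involution exchanging the coordinates of type `0` with those of type
`1` or `2`. -/
def swapFun : ℕ × Fin 3 → ℕ × Fin 3
  | (n, 0) => if n % 2 = 0 then (n / 2, 1) else (n / 2, 2)
  | (n, 1) => (2 * n, 0)
  | (n, 2) => (2 * n + 1, 0)

lemma swapFun_invol : Function.Involutive swapFun := by
  rintro ⟨n, i⟩
  fin_cases i
  · rcases Nat.even_or_odd' n with ⟨k, rfl | rfl⟩
    · simp [swapFun]
    · have h1 : (2 * k + 1) % 2 = 1 := by omega
      have h2 : (2 * k + 1) / 2 = k := by omega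
      simp [swapFun, h1, h2]
  · simp [swapFun]
  · have h1 : (2 * n + 1) % 2 = 1 := by omega
    have h2 : (2 * n + 1) / 2 = n := by omega
    simp [swapFun, h1, h2]

lemma swapFun_sign (p : ℕ × Fin 3) : (swapFun p).2 = 0 ↔ p.2 ≠ 0 := by
  rcases p with ⟨n, i⟩
  fin_cases i
  · by_cases h : n % 2 = 0 <;> simp [swapFun, h]
  · simp [swapFun]
  · simp [swapFun]

/-- A triple as a function on `Fin 3`. -/
def tripleFun {X : Type*} (x : X × X × X) : Fin 3 → X := ![x.1, x.2.1, x.2.2]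

lemma measurable_tripleFun {X : Type*} [MeasurableSpace X] :
    Measurable (tripleFun : X × X × X → Fin 3 → X) := by
  refine measurable_pi_lambda _ fun i => ?_
  fin_cases i
  · exact measurable_fst
  · exact measurable_fst.comp measurable_snd
  · exact measurable_snd.comp measurable_snd

lemma map_tripleFun {X : Type*} [MeasurableSpace X] (μ : Measure X) [IsProbabilityMeasure μ] :
    (μ.prod (μ.prod μ)).map tripleFun = Measure.pi fun _ : Fin 3 => μ := by
  symm
  refine Measure.pi_eq fun s hs => ?_
  rw [Measure.map_apply measurable_tripleFun (MeasurableSet.univ_pi hs)]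
  have : (tripleFun ⁻¹' Set.pi Set.univ s : Set (X × X × X)) = s 0 ×ˢ (s 1 ×ˢ s 2) := by
    ext x
    simp [tripleFun, Set.mem_pi, Fin.forall_fin_succ]
  rw [this, Measure.prod_prod, Measure.prod_prod, Fin.prod_univ_three, mul_assoc]

/-- Flattening `(X³)^ℕ` to `X^(ℕ × 3)`. -/
def flat {X : Type*} [MeasurableSpace X] : (ℕ → X × X × X) ≃ᵐ (ℕ × Fin 3 → X) where
  toFun z p := tripleFun (z p.1) p.2
  invFun w n := (w (n, 0), w (n, 1), w (n, 2))
  left_inv z := rfl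
  right_inv w := by
    funext ⟨n, i⟩
    fin_cases i <;> rfl
  measurable_toFun := by
    refine measurable_pi_lambda _ fun p => ?_
    exact (measurable_pi_apply p.2).comp (measurable_tripleFun.comp (measurable_pi_apply p.1))
  measurable_invFun := by
    refine measurable_pi_lambda _ fun n => ?_
    exact (measurable_pi_apply _).prodMk ((measurable_pi_apply _).prodMk (measurable_pi_apply _))

lemma flat_apply {X : Type*} [MeasurableSpace X] (z : ℕ → X × X × X) (p : ℕ × Fin 3) :
    flat z p = tripleFun (z p.1) p.2 := rfl

lemma map_flat {X : Type*} [MeasurableSpace X] (μ : Measure X) [IsProbabilityMeasure μ] :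
    (Measure.infinitePi fun _ : ℕ => μ.prod (μ.prod μ)).map flat
      = Measure.infinitePi fun _ : ℕ × Fin 3 => μ := by
  have h1 := Measure.infinitePi_map_pi (μ := fun _ : ℕ => μ.prod (μ.prod μ))
    (f := fun _ => tripleFun) (fun _ => measurable_tripleFun)
  simp only [map_tripleFun, ← Measure.infinitePi_eq_pi] at h1
  have h2 := Measure.infinitePi_map_curry_symm (ι := ℕ) (κ := Fin 3) (fun _ _ => μ)
  rw [← h2, ← h1, Measure.map_map (MeasurableEquiv.measurable _)]
  · rfl
  · exact measurable_pi_lambda _ fun n => measurable_tripleFun.comp (measurable_pi_apply n)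

/-- Let `S` be a measure-preserving automorphism of a probability space `(X, μ)`, let
`T = S⁻¹ × S × S` act on `X³` with the measure `μ ⊗ μ ⊗ μ`, and let `T^∞` be the automorphism
of the countable power `(X³)^ℕ` applying `T` in every coordinate, where `(X³)^ℕ` carries the
infinite product measure `ξ` of countably many copies of `μ ⊗ μ ⊗ μ` (characterized as the
projective limit of the finite products). Then `T^∞` is conjugate to its inverse by a
measure-preserving automorphism. -/
theorem infinite_power_symmetric
    {X : Type*} [MeasurableSpace X]
    (μ : Measure X) [IsProbabilityMeasure μ]
    (S : X ≃ᵐ X) (hS : MeasurePreserving S μ μ)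
    (ξ : Measure (ℕ → X × X × X)) [IsProbabilityMeasure ξ]
    (hξ : IsProjectiveLimit ξ
      (fun _ : Finset ℕ => Measure.pi fun _ => μ.prod (μ.prod μ))) :
    ∃ Φ : (ℕ → X × X × X) ≃ᵐ (ℕ → X × X × X),
      MeasurePreserving Φ ξ ξ ∧
      ∀ z, Φ (MeasurableEquiv.piCongrRight (fun _ : ℕ => S.symm.prodCongr (S.prodCongr S)) z)
          = (MeasurableEquiv.piCongrRight (fun _ : ℕ => S.symm.prodCongr (S.prodCongr S))).symm
              (Φ z) := by
  have hξ' : ξ = Measure.infinitePi fun _ : ℕ => μ.prod (μ.prod μ) :=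
    hξ.unique (Measure.isProjectiveLimit_infinitePi _)
  have hF : MeasurePreserving (flat (X := X)) ξ (Measure.infinitePi fun _ : ℕ × Fin 3 => μ) :=
    ⟨flat.measurable, by rw [hξ', map_flat]⟩
  let e : Equiv.Perm (ℕ × Fin 3) := swapFun_invol.toPerm
  let E : (ℕ × Fin 3 → X) ≃ᵐ (ℕ × Fin 3 → X) := MeasurableEquiv.piCongrLeft (fun _ => X) e
  have hE : MeasurePreserving E (Measure.infinitePi fun _ : ℕ × Fin 3 => μ)
      (Measure.infinitePi fun _ : ℕ × Fin 3 => μ) :=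
    ⟨E.measurable, Measure.infinitePi_map_piCongrLeft (fun _ : ℕ × Fin 3 => μ) e⟩
  have hEa : ∀ w p, E w p = w (swapFun p) := by
    intro w p
    have := MeasurableEquiv.piCongrLeft_apply_apply (β := fun _ => X) e w (swapFun p)
    have h2 : e (swapFun p) = p := swapFun_invol p
    rw [h2] at this
    exact this
  let A : ℕ × Fin 3 → X ≃ᵐ X := fun p => if p.2 = 0 then S.symm else S
  have hA : ∀ p, A (swapFun p) = (A p).symm := by
    intro p
    by_cases h : p.2 = 0
    · have : ¬ (swapFun p).2 = 0 := by rw [swapFun_sign]; simp [h]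
      simp only [A, if_pos h, if_neg this]
      rfl
    · have : (swapFun p).2 = 0 := by rw [swapFun_sign]; exact h
      simp only [A, if_neg h, if_pos this]
  set T := MeasurableEquiv.piCongrRight (fun _ : ℕ => S.symm.prodCongr (S.prodCongr S)) with hT
  have hTf : ∀ z p, flat (T z) p = A p (flat z p) := by
    rintro z ⟨n, i⟩
    fin_cases i <;> rfl
  have hTs : ∀ z p, flat (T.symm z) p = (A p).symm (flat z p) := by
    intro z p
    rw [MeasurableEquiv.eq_symm_apply, ← hTf, T.apply_symm_apply]
  refine ⟨(flat.trans E).trans flat.symm, (hF.symm).comp (hE.comp hF), fun z => ?_⟩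
  apply flat.injective
  funext p
  rw [hTs]
  simp only [MeasurableEquiv.trans_apply, MeasurableEquiv.apply_symm_apply]
  rw [hEa, hEa, hTf, hA]
end
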